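/- Let G be a finite group acting by pseudo-reflections on a finite-dimensional vector space V over a field of characteristic not dividing |G|. Then the invariant ring k[V]^G is a polynomial algebra on dim V homogeneous generators. -/

import Mathlib

open MvPolynomial

variable {k : Type*} [Field k] {r : ℕ}

/-- The algebra automorphism of `k[V] = k[X_1, …, X_r]` induced by a matrix `g`,
sending `X i` to `∑ j, g i j • X j`. -/
noncomputable def matrixAct (g : GL (Fin r) k) :
    MvPolynomial (Fin r) k →ₐ[k] MvPolynomial (Fin r) k :=
  MvPolynomial.aeval fun i => ∑ j, ((g : Matrix (Fin r) (Fin r) k) i j) • X j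

/-- `g ∈ GL(V)` is a pseudo-reflection: it has finite order, is not the identity,
and its fixed subspace has codimension 1 (equivalently `rank (g - 1) = 1`). -/
def IsPseudoReflection (g : GL (Fin r) k) : Prop :=
  IsOfFinOrder g ∧ g ≠ 1 ∧ Matrix.rank ((g : Matrix (Fin r) (Fin r) k) - 1) = 1

section Koszul

variable {S : Type*} [CommRing S]

theorem basis_mem_smul_top {M ι : Type*} [AddCommGroup M] [Module S M] [Fintype ι]
    (b : Module.Basis ι S M) (J : Ideal S) (y : M) :
    y ∈ J • (⊤ : Submodule S M) ↔ ∀ i, b.repr y i ∈ J := by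
  constructor
  · intro h i
    induction h using Submodule.smul_induction_on' with
    | smul a ha n hn =>
      simpa using J.mul_mem_right _ ha
    | add x hx y hy h1 h2 =>
      simpa using J.add_mem h1 h2
  · intro h
    rw [← b.sum_repr y]
    exact Submodule.sum_mem _ fun i _ => Submodule.smul_mem_smul (h i) trivial

variable {r : ℕ}

open CliffordAlgebra in
theorem koszul_list (x : Fin r → S) (t : Finset S) [DecidableEq S]
    (hx : Ideal.span (Set.range x) ≠ ⊤)
    (ht : ∀ f ∈ t, f ∈ Ideal.span (Set.range x))
    (key : ∀ f ∈ t, ∀ h, f * h ∈ Ideal.span (t.erase f : Set S) → h ∈ Ideal.span (t : Set S))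
    (a : S → (Fin r → S)) (d : Module.Dual S (Fin r → S)) (hd : ∀ v, d v = ∑ i, v i * x i)
    (ha : ∀ f ∈ t, d (a f) = f)
    (l : List S) (hl : l.Nodup) (hlt : ∀ f ∈ l, f ∈ t) :
    (l.map fun f => ExteriorAlgebra.ι S (a f)).prod ∉
      LinearMap.range (contractLeft (Q := (0 : QuadraticForm S (Fin r → S))) d) ⊔
        Ideal.span (t : Set S) • (⊤ : Submodule S (ExteriorAlgebra S (Fin r → S))) := by
  classical
  set D := contractLeft (Q := (0 : QuadraticForm S (Fin r → S))) d with hD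
  set m := Ideal.span (Set.range x) with hm
  have hIm : Ideal.span (t : Set S) ≤ m := Ideal.span_le.2 ht
  have hdm : ∀ v, d v ∈ m := fun v => by
    rw [hd]
    exact sum_mem fun i _ => m.mul_mem_left _ (Ideal.subset_span ⟨i, rfl⟩)
  have hDι : ∀ v w, D (ExteriorAlgebra.ι S v * w) = d v • w - ExteriorAlgebra.ι S v * D w :=
    fun v w => contractLeft_ι_mul d v w
  have hDD : ∀ w, D (D w) = 0 := fun w => contractLeft_contractLeft d w
  let b := (Pi.basisFun S (Fin r)).ExteriorAlgebra
  induction l with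
  | nil =>
    intro h
    simp only [List.map_nil, List.prod_nil] at h
    apply hx
    rw [Ideal.eq_top_iff_one]
    obtain ⟨y, ⟨η, rfl⟩, z, hz, hyz⟩ := Submodule.mem_sup.1 h
    have h1 : ∀ η : ExteriorAlgebra S (Fin r → S), ExteriorAlgebra.algebraMapInv (D η) ∈ m := by
      intro η
      induction η using CliffordAlgebra.left_induction with
      | algebraMap s => simp [hD, contractLeft_algebraMap]
      | add x y hx hy => simpa using m.add_mem hx hy
      | ι_mul w v hw =>
        have := hDι v w
        change ExteriorAlgebra.algebraMapInv (D (ExteriorAlgebra.ι S v * w)) ∈ m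
        rw [this]
        simp only [map_sub, map_smul, map_mul, smul_eq_mul]
        simp only [ExteriorAlgebra.algebraMapInv, ExteriorAlgebra.lift_ι_apply]
        simpa using m.mul_mem_right _ (hdm v)
    have h2 : ExteriorAlgebra.algebraMapInv z ∈ m := by
      clear hyz
      induction hz using Submodule.smul_induction_on' with
      | smul a ha n hn =>
        simpa using m.mul_mem_right _ (hIm ha)
      | add x hx y hy h1 h2 =>
        simpa using m.add_mem h1 h2
    have h3 := m.add_mem (h1 η) h2
    rw [← map_add, hyz, map_one] at h3
    exact h3
  | cons f l ih =>
    intro h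
    have hf : f ∈ t := hlt f (by simp)
    apply ih (List.nodup_cons.1 hl).2 (fun g hg => hlt g (by simp [hg]))
    have hfl := (List.nodup_cons.1 hl).1
    set W := (l.map fun f => ExteriorAlgebra.ι S (a f)).prod with hW
    simp only [List.map_cons, List.prod_cons, ← hW] at h
    set J := Ideal.span (t.erase f : Set S) with hJ
    have hI : Ideal.span (t : Set S) = Ideal.span {f} ⊔ J := by
      rw [hJ, ← Ideal.span_insert, ← Finset.coe_insert, Finset.insert_erase hf]
    obtain ⟨y, ⟨η, rfl⟩, z, hz, hyz⟩ := Submodule.mem_sup.1 h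
    rw [hI, Submodule.sup_smul] at hz
    obtain ⟨z1, hz1, z2, hz2, rfl⟩ := Submodule.mem_sup.1 hz
    rw [Submodule.ideal_span_singleton_smul, Submodule.mem_smul_pointwise_iff_exists] at hz1
    obtain ⟨θ, -, rfl⟩ := hz1
    have e := congrArg D hyz
    rw [hDι, ha f hf] at e
    simp only [map_add, hDD, zero_add, map_smul] at e
    -- derivative of a product over a list
    have hDW : ∀ l' : List S, (∀ g ∈ l', g ∈ l) →
        D (l'.map fun f => ExteriorAlgebra.ι S (a f)).prod ∈
          J • (⊤ : Submodule S (ExteriorAlgebra S (Fin r → S))) := by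
      intro l' hl'
      induction l' with
      | nil => simp [hD]
      | cons g l' ih' =>
        simp only [List.map_cons, List.prod_cons]
        have hgl : g ∈ l := hl' g (by simp)
        have hgt : g ∈ t := hlt g (by simp [hgl])
        rw [hDι, ha g hgt]
        refine Submodule.sub_mem _ (Submodule.smul_mem_smul (Ideal.subset_span ?_) trivial) ?_
        · simp only [Finset.coe_erase, Set.mem_sdiff, Finset.mem_coe, Set.mem_singleton_iff]
          exact ⟨hgt, fun h => hfl (h ▸ hgl)⟩
        · have := ih' (fun g hg => hl' g (by simp [hg]))
          have h2 := Submodule.mem_map_of_mem (f := LinearMap.mulLeft S (ExteriorAlgebra.ι S (a g))) this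
          rw [Submodule.map_smul''] at h2
          exact Submodule.smul_mono le_rfl le_top h2
    have hDz2 : D z2 ∈ J • (⊤ : Submodule S (ExteriorAlgebra S (Fin r → S))) := by
      have h2 := Submodule.mem_map_of_mem (f := D) hz2
      rw [Submodule.map_smul''] at h2
      exact Submodule.smul_mono le_rfl le_top h2
    have hfD : ExteriorAlgebra.ι S (a f) * D W ∈ J • (⊤ : Submodule S (ExteriorAlgebra S (Fin r → S))) := by
      have h2 := Submodule.mem_map_of_mem (f := LinearMap.mulLeft S (ExteriorAlgebra.ι S (a f))) (hDW l (fun _ h => h))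
      rw [Submodule.map_smul''] at h2
      exact Submodule.smul_mono le_rfl le_top h2
    have hmain : f • (W - D θ) ∈ J • (⊤ : Submodule S (ExteriorAlgebra S (Fin r → S))) := by
      have : f • (W - D θ) = D z2 + ExteriorAlgebra.ι S (a f) * D W := by
        rw [smul_sub, sub_eq_iff_eq_add.1 e.symm]
        abel
      rw [this]
      exact Submodule.add_mem _ hDz2 hfD
    have hfin : W - D θ ∈ Ideal.span (t : Set S) • (⊤ : Submodule S (ExteriorAlgebra S (Fin r → S))) := by
      rw [basis_mem_smul_top b] at hmain ⊢
      intro i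
      refine key f hf _ ?_
      have := hmain i
      rwa [map_smul, Finsupp.smul_apply, smul_eq_mul] at this
    rw [Submodule.mem_sup]
    exact ⟨D θ, ⟨θ, rfl⟩, _, hfin, by abel⟩

theorem koszul_card [IsDomain S] (x : Fin r → S) (t : Finset S) [DecidableEq S]
    (hx : Ideal.span (Set.range x) ≠ ⊤)
    (ht : ∀ f ∈ t, f ∈ Ideal.span (Set.range x))
    (key : ∀ f ∈ t, ∀ h, f * h ∈ Ideal.span (t.erase f : Set S) → h ∈ Ideal.span (t : Set S)) :
    t.card ≤ r := by
  classical
  by_contra hcard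
  have hex : ∀ f, ∃ v : Fin r → S, f ∈ t → Fintype.linearCombination S x v = f := by
    intro f
    by_cases hf : f ∈ t
    · have := ht f hf
      rw [Ideal.span, ← Fintype.range_linearCombination] at this
      obtain ⟨v, hv⟩ := this
      exact ⟨v, fun _ => hv⟩
    · exact ⟨0, fun h => (hf h).elim⟩
  choose a ha using hex
  have := koszul_list x t hx ht key a (Fintype.linearCombination S x)
    (fun v => by simp [Fintype.linearCombination_apply]) ha t.toList t.nodup_toList
    (fun f hf => by simpa using hf)
  apply this
  have : Module.Free S (ExteriorAlgebra S (Fin r → S)) :=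
    Module.Free.of_basis (Pi.basisFun S (Fin r)).ExteriorAlgebra
  have h0 : ExteriorAlgebra.ιMulti S t.toList.length (fun i => a (t.toList.get i)) = 0 := by
    apply AlternatingMap.map_linearDependent
    intro hli
    have := hli.fintype_card_le_finrank
    simp at this
    omega
  rw [ExteriorAlgebra.ιMulti_apply] at h0
  have h1 : (t.toList.map fun f => ExteriorAlgebra.ι S (a f)) =
    List.ofFn fun i => ExteriorAlgebra.ι S (a (t.toList.get i)) := by
    conv_lhs => rw [← List.ofFn_get t.toList]
    rw [List.map_ofFn]
    rfl
  rw [h1, h0]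
  exact zero_mem _

end Koszul

section Action

theorem matrixAct_X (g : GL (Fin r) k) (i : Fin r) :
    matrixAct g (X i) = ∑ j, ((g : Matrix (Fin r) (Fin r) k) i j) • X j := by
  simp [matrixAct]

theorem matrixAct_one : matrixAct (1 : GL (Fin r) k) = AlgHom.id k _ := by
  apply MvPolynomial.algHom_ext
  intro i
  rw [matrixAct_X]
  simp [Matrix.one_apply]

theorem matrixAct_mul (g h : GL (Fin r) k) :
    matrixAct (g * h) = (matrixAct h).comp (matrixAct g) := by
  apply MvPolynomial.algHom_ext
  intro i
  rw [matrixAct_X, AlgHom.comp_apply, matrixAct_X]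
  simp only [map_sum, map_smul, matrixAct_X, Units.val_mul, Matrix.mul_apply, Finset.sum_smul,
    Finset.smul_sum, smul_smul]
  rw [Finset.sum_comm]

theorem matrixAct_mul_apply (g h : GL (Fin r) k) (p : MvPolynomial (Fin r) k) :
    matrixAct (g * h) p = matrixAct h (matrixAct g p) := by
  rw [matrixAct_mul]; rfl

theorem matrixAct_homogeneous (g : GL (Fin r) k) {p : MvPolynomial (Fin r) k} {n : ℕ}
    (hp : p.IsHomogeneous n) : (matrixAct g p).IsHomogeneous n := by
  have := IsHomogeneous.aeval (S := k) (n := 1) hp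
    (fun i => ∑ j, ((g : Matrix (Fin r) (Fin r) k) i j) • (X j : MvPolynomial (Fin r) k)) (by
    intro i
    apply IsHomogeneous.sum
    intro j _
    rw [MvPolynomial.smul_eq_C_mul]
    simpa using (isHomogeneous_C (Fin r) _).mul (isHomogeneous_X k j))
  simpa [matrixAct] using this

theorem matrixAct_hc (g : GL (Fin r) k) (p : MvPolynomial (Fin r) k) (n : ℕ) :
    homogeneousComponent n (matrixAct g p) = matrixAct g (homogeneousComponent n p) := by
  conv_lhs => rw [← sum_homogeneousComponent p]
  rw [map_sum, map_sum]
  have : ∀ i, homogeneousComponent n (matrixAct g (homogeneousComponent i p)) =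
      if i = n then matrixAct g (homogeneousComponent i p) else 0 := by
    intro i
    rw [homogeneousComponent_of_mem
      (matrixAct_homogeneous g (homogeneousComponent_isHomogeneous i p))]
    simp only [eq_comm]
  simp only [this]
  rw [Finset.sum_ite_eq']
  split_ifs with h
  · rfl
  · rw [homogeneousComponent_eq_zero, map_zero]
    simpa using h

theorem matrixAct_totalDegree (g : GL (Fin r) k) (p : MvPolynomial (Fin r) k) :
    (matrixAct g p).totalDegree ≤ p.totalDegree := by
  conv_lhs => rw [← sum_homogeneousComponent p]
  rw [map_sum]
  refine (totalDegree_finsetSum _ _).trans (Finset.sup_le fun i hi => ?_)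
  refine (matrixAct_homogeneous g (homogeneousComponent_isHomogeneous i p)).totalDegree_le.trans ?_
  simp at hi
  omega

theorem hc_mul {f : MvPolynomial (Fin r) k} {d : ℕ} (hf : f.IsHomogeneous d)
    (h : MvPolynomial (Fin r) k) (n : ℕ) :
    homogeneousComponent n (f * h) = if d ≤ n then f * homogeneousComponent (n - d) h else 0 := by
  conv_lhs => rw [← sum_homogeneousComponent h]
  rw [Finset.mul_sum, map_sum]
  have : ∀ i, homogeneousComponent n (f * homogeneousComponent i h) =
      if d + i = n then f * homogeneousComponent i h else 0 := by
    intro i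
    rw [homogeneousComponent_of_mem (hf.mul (homogeneousComponent_isHomogeneous i h))]
    simp only [eq_comm]
  simp only [this]
  split_ifs with hd
  · have h2 : ∀ i, (d + i = n) ↔ i = n - d := by omega
    simp only [h2]
    rw [Finset.sum_ite_eq']
    split_ifs with h
    · rfl
    · rw [homogeneousComponent_eq_zero, mul_zero]
      simp only [Finset.mem_range] at h
      omega
  · apply Finset.sum_eq_zero
    intro i _
    rw [if_neg (by omega)]

theorem reflection_form (s : GL (Fin r) k) (hs : IsPseudoReflection s) :
    ∃ l : MvPolynomial (Fin r) k, l ≠ 0 ∧ l.IsHomogeneous 1 ∧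
      ∀ p, l ∣ matrixAct s p - p := by
  obtain ⟨-, -, hr⟩ := hs
  set M := (s : Matrix (Fin r) (Fin r) k) - 1 with hM
  have hr' := hr
  rw [Matrix.rank, finrank_eq_one_iff'] at hr'
  obtain ⟨⟨u, hu⟩, -, huv⟩ := hr'
  have : ∀ j, ∃ c : k, ∀ i, M i j = c * u i := by
    intro j
    obtain ⟨c, hc⟩ := huv ⟨M.mulVecLin (Pi.single j 1), LinearMap.mem_range_self _ _⟩
    refine ⟨c, fun i => ?_⟩
    have := congrFun (congrArg Subtype.val hc) i
    simpa using this.symm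
  choose v hv using this
  refine ⟨∑ j, v j • X j, ?_, ?_, ?_⟩
  · intro h0
    have hv0 : ∀ j, v j = 0 := by
      intro j
      have := congrArg (coeff (Finsupp.single j 1)) h0
      simpa [coeff_sum, coeff_X, Finsupp.single_left_inj] using this
    have : M = 0 := by
      ext i j
      simp [hv, hv0]
    rw [this] at hr
    simp at hr
  · apply IsHomogeneous.sum
    intro j _
    rw [MvPolynomial.smul_eq_C_mul]
    simpa using (isHomogeneous_C (Fin r) _).mul (isHomogeneous_X k j)
  · intro p
    set l : MvPolynomial (Fin r) k := ∑ j, v j • X j with hl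
    rw [← Ideal.mem_span_singleton, ← Ideal.Quotient.mk_eq_mk_iff_sub_mem]
    have : (Ideal.Quotient.mkₐ k (Ideal.span {l})).comp (matrixAct s) =
        Ideal.Quotient.mkₐ k (Ideal.span {l}) := by
      apply MvPolynomial.algHom_ext
      intro i
      rw [AlgHom.comp_apply]
      simp only [Ideal.Quotient.mkₐ_eq_mk]
      rw [Ideal.Quotient.mk_eq_mk_iff_sub_mem, Ideal.mem_span_singleton, matrixAct_X]
      refine ⟨C (u i), ?_⟩
      have h1 : (X i : MvPolynomial (Fin r) k) =
        ∑ j, ((1 : Matrix (Fin r) (Fin r) k) i j) • X j := by simp [Matrix.one_apply]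
      conv_lhs => rw [h1]
      rw [← Finset.sum_sub_distrib, hl, Finset.sum_mul]
      refine Finset.sum_congr rfl fun j _ => ?_
      rw [← sub_smul]
      have h2 : (s : Matrix (Fin r) (Fin r) k) i j - (1 : Matrix (Fin r) (Fin r) k) i j
        = v j * u i := by rw [← hv]; rfl
      rw [h2, smul_eq_C_mul, smul_eq_C_mul, C_mul]
      ring
    exact DFunLike.congr_fun this p

end Action

section Chevalley

variable {G : Type*} [Group G] [Finite G]

/-- the Reynolds operator -/
noncomputable def reynolds (ρ : G →* GL (Fin r) k) (p : MvPolynomial (Fin r) k) :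
    MvPolynomial (Fin r) k :=
  ((Nat.card G : k)⁻¹) • ∑ᶠ g : G, matrixAct (ρ g) p

theorem reynolds_inv (ρ : G →* GL (Fin r) k) (p : MvPolynomial (Fin r) k) (g : G) :
    matrixAct (ρ g) (reynolds ρ p) = reynolds ρ p := by
  have := Fintype.ofFinite G
  simp only [reynolds, finsum_eq_sum_of_fintype, map_smul, map_sum]
  congr 1
  simp only [← matrixAct_mul_apply, ← map_mul]
  exact Fintype.sum_equiv (Equiv.mulRight g) _ _ (fun x => rfl)

theorem reynolds_sum (ρ : G →* GL (Fin r) k) {ι : Type*} (t : Finset ι)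
    (f q : ι → MvPolynomial (Fin r) k) (hf : ∀ i ∈ t, ∀ g, matrixAct (ρ g) (f i) = f i) :
    reynolds ρ (∑ i ∈ t, f i * q i) = ∑ i ∈ t, f i * reynolds ρ (q i) := by
  have := Fintype.ofFinite G
  simp only [reynolds, finsum_eq_sum_of_fintype, map_sum, map_mul]
  rw [Finset.sum_comm, Finset.smul_sum]
  refine Finset.sum_congr rfl fun i hi => ?_
  rw [mul_smul_comm, Finset.mul_sum]
  congr 1
  exact Finset.sum_congr rfl fun g _ => by rw [hf i hi]

theorem reynolds_sub_mem (ρ : G →* GL (Fin r) k) (hc : (Nat.card G : k) ≠ 0)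
    (I : Ideal (MvPolynomial (Fin r) k)) (p : MvPolynomial (Fin r) k)
    (h : ∀ g, matrixAct (ρ g) p - p ∈ I) : reynolds ρ p - p ∈ I := by
  have := Fintype.ofFinite G
  have e : reynolds ρ p - p = ((Nat.card G : k)⁻¹) • ∑ g : G, (matrixAct (ρ g) p - p) := by
    rw [Finset.sum_sub_distrib, smul_sub, reynolds, finsum_eq_sum_of_fintype]
    congr 1
    rw [Finset.sum_const, Finset.card_univ, ← Nat.card_eq_fintype_card, ← Nat.cast_smul_eq_nsmul k,
      smul_smul, inv_mul_cancel₀ hc, one_smul]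
  rw [e, smul_eq_C_mul]
  exact I.mul_mem_left _ (I.sum_mem fun g _ => h g)

theorem reynolds_eq (ρ : G →* GL (Fin r) k) (hc : (Nat.card G : k) ≠ 0)
    (p : MvPolynomial (Fin r) k) (h : ∀ g, matrixAct (ρ g) p = p) : reynolds ρ p = p := by
  have := reynolds_sub_mem ρ hc ⊥ p (fun g => by simp [h g])
  simpa [sub_eq_zero] using this

theorem chevalley (ρ : G →* GL (Fin r) k) (hc : (Nat.card G : k) ≠ 0)
    (hrefl : Subgroup.closure {g | g ∈ ρ.range ∧ IsPseudoReflection g} = ρ.range)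
    [DecidableEq (MvPolynomial (Fin r) k)]
    (t : Finset (MvPolynomial (Fin r) k))
    (ht : ∀ f ∈ t, (∀ g, matrixAct (ρ g) f = f) ∧ ∃ d, 0 < d ∧ f.IsHomogeneous d)
    (hI : ∀ p d, (∀ g, matrixAct (ρ g) p = p) → 0 < d → p.IsHomogeneous d →
      p ∈ Ideal.span (t : Set (MvPolynomial (Fin r) k)))
    (hmin : ∀ f ∈ t, f ∉ Ideal.span (t.erase f : Set (MvPolynomial (Fin r) k)))
    (f : MvPolynomial (Fin r) k) (hf : f ∈ t) (n : ℕ) :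
    ∀ h : MvPolynomial (Fin r) k, h.totalDegree < n →
      f * h ∈ Ideal.span (t.erase f : Set (MvPolynomial (Fin r) k)) →
      h ∈ Ideal.span (t : Set (MvPolynomial (Fin r) k)) := by
  induction n with
  | zero => intro h hh; omega
  | succ n ih =>
    intro h hn hJ
    set J := Ideal.span (t.erase f : Set (MvPolynomial (Fin r) k)) with hJdef
    set I := Ideal.span (t : Set (MvPolynomial (Fin r) k)) with hIdef
    -- write down the relation
    obtain ⟨q, hq⟩ : ∃ q : MvPolynomial (Fin r) k → MvPolynomial (Fin r) k,
        f * h = ∑ x ∈ t.erase f, x * q x := by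
      rw [hJdef, Ideal.span, Submodule.mem_span_finset] at hJ
      obtain ⟨q, -, hq⟩ := hJ
      exact ⟨q, by rw [← hq]; exact Finset.sum_congr rfl fun x _ => by rw [smul_eq_mul, mul_comm]⟩
    -- constant coefficient vanishes
    have hcoeff : coeff 0 h = 0 := by
      by_contra hne
      apply hmin f hf
      obtain ⟨d, -, hd⟩ := (ht f hf).2
      have e := congrArg (homogeneousComponent d) hq
      rw [hc_mul hd, if_pos le_rfl, Nat.sub_self, homogeneousComponent_zero, map_sum] at e
      have e2 : f * C (coeff 0 h) ∈ J := by
        rw [e]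
        refine J.sum_mem fun x hx => ?_
        obtain ⟨d', -, hd'⟩ := (ht x (Finset.mem_of_mem_erase hx)).2
        rw [hc_mul hd']
        split_ifs
        · exact J.mul_mem_right _ (Ideal.subset_span hx)
        · exact J.zero_mem
      have e3 := J.mul_mem_right (C (coeff 0 h)⁻¹) e2
      rwa [mul_assoc, ← C_mul, mul_inv_cancel₀ hne, C_1, mul_one] at e3
    -- `I` is stable
    have hstab : ∀ g ∈ ρ.range, ∀ p ∈ I, matrixAct g p ∈ I := by
      rintro _ ⟨g, rfl⟩ p hp
      have : I ≤ I.comap (matrixAct (ρ g)) := by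
        rw [hIdef, Ideal.span_le]
        intro x hx
        rw [SetLike.mem_coe, Ideal.mem_comap, (ht x hx).1 g]
        exact Ideal.subset_span hx
      exact this hp
    have hstep : ∀ g ∈ ρ.range, matrixAct g h - h ∈ I := by
      intro g hg
      have hg' := hg
      rw [← hrefl] at hg
      induction hg using Subgroup.closure_induction with
      | mem s hs =>
        obtain ⟨⟨g, rfl⟩, hs⟩ := hs
        obtain ⟨l, hl0, hl1, hl⟩ := reflection_form _ hs
        choose D hD using hl
        have hrel : f * D h = ∑ x ∈ t.erase f, x * D (q x) := by
          apply mul_left_cancel₀ hl0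
          have e := congrArg (fun p => matrixAct (ρ g) p - p) hq
          simp only [map_mul, map_sum, (ht f hf).1 g] at e
          rw [← mul_sub, hD, ← Finset.sum_sub_distrib] at e
          rw [mul_left_comm, e, Finset.mul_sum]
          refine Finset.sum_congr rfl fun x hx => ?_
          rw [(ht x (Finset.mem_of_mem_erase hx)).1 g, ← mul_sub, hD, mul_left_comm]
        rw [hD]
        apply I.mul_mem_left
        by_cases hDh : D h = 0
        · rw [hDh]; exact I.zero_mem
        apply ih
        · have h1 : (l * D h).totalDegree = 1 + (D h).totalDegree := by
            rw [totalDegree_mul_of_isDomain hl0 hDh, hl1.totalDegree hl0]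
          have h2 : (matrixAct (ρ g) h - h).totalDegree ≤ h.totalDegree :=
            (totalDegree_sub _ _).trans (max_le (matrixAct_totalDegree _ _) le_rfl)
          rw [hD] at h2
          omega
        · rw [hrel]
          exact J.sum_mem fun x hx => J.mul_mem_right _ (Ideal.subset_span hx)
      | one => simp [matrixAct_one]
      | mul a b ha hb iha ihb =>
        rw [hrefl] at ha hb
        rw [matrixAct_mul_apply]
        have := I.add_mem (hstab b hb _ (iha ha)) (ihb hb)
        rw [map_sub] at this
        simpa using this
      | inv a ha iha =>
        rw [hrefl] at ha
        have := hstab _ hg' _ (iha ha)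
        rw [map_sub, ← matrixAct_mul_apply, mul_inv_cancel, matrixAct_one, AlgHom.id_apply] at this
        rw [← neg_mem_iff]
        simpa using this
    have hR : reynolds ρ h - h ∈ I := reynolds_sub_mem ρ hc I h fun g => hstep _ ⟨g, rfl⟩
    have hcomp : ∀ i, 0 < i → homogeneousComponent i (reynolds ρ h) ∈ I := fun i hi =>
      hI _ i (fun g => by rw [← matrixAct_hc, reynolds_inv]) hi
        (homogeneousComponent_isHomogeneous _ _)
    have hI0 : ∀ p ∈ I, constantCoeff p = 0 := by
      intro p hp
      have : I ≤ RingHom.ker (constantCoeff (R := k) (σ := Fin r)) := by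
        rw [hIdef, Ideal.span_le]
        intro x hx
        obtain ⟨d, hd0, hd⟩ := (ht x hx).2
        rw [SetLike.mem_coe, RingHom.mem_ker, constantCoeff_eq]
        exact hd.coeff_eq_zero (by simpa using hd0.ne)
      exact this hp
    have h0 : coeff 0 (reynolds ρ h) = 0 := by
      have := hI0 _ hR
      rw [map_sub, constantCoeff_eq, hcoeff, sub_zero] at this
      exact this
    have hRI : reynolds ρ h ∈ I := by
      rw [← sum_homogeneousComponent (reynolds ρ h)]
      refine I.sum_mem fun i _ => ?_
      rcases Nat.eq_zero_or_pos i with rfl | hi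
      · rw [homogeneousComponent_zero, h0, C_0]; exact I.zero_mem
      · exact hcomp i hi
    have := I.sub_mem hRI hR
    simpa using this

theorem invariants_generated (ρ : G →* GL (Fin r) k) (hc : (Nat.card G : k) ≠ 0)
    (t : Finset (MvPolynomial (Fin r) k))
    (ht : ∀ f ∈ t, (∀ g, matrixAct (ρ g) f = f) ∧ ∃ d, 0 < d ∧ f.IsHomogeneous d)
    (hI : ∀ p d, (∀ g, matrixAct (ρ g) p = p) → 0 < d → p.IsHomogeneous d →
      p ∈ Ideal.span (t : Set (MvPolynomial (Fin r) k)))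
    (p : MvPolynomial (Fin r) k) (hp : ∀ g, matrixAct (ρ g) p = p) :
    p ∈ Algebra.adjoin k (t : Set (MvPolynomial (Fin r) k)) := by
  have main : ∀ n, ∀ p : MvPolynomial (Fin r) k, (∀ g, matrixAct (ρ g) p = p) →
      p.IsHomogeneous n → p ∈ Algebra.adjoin k (t : Set (MvPolynomial (Fin r) k)) := by
    intro n
    induction n using Nat.strong_induction_on with
    | _ n ih =>
      intro p hp hn
      rcases Nat.eq_zero_or_pos n with rfl | hpos
      · have : p = C (coeff 0 p) := by
          rw [← homogeneousComponent_zero, homogeneousComponent_of_mem hn, if_pos rfl]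
        rw [this]
        exact Subalgebra.algebraMap_mem _ _
      · have hpI := hI p n hp hpos hn
        rw [Ideal.span, Submodule.mem_span_finset] at hpI
        obtain ⟨q, -, hq⟩ := hpI
        have hq' : p = ∑ x ∈ t, x * q x := by
          rw [← hq]; exact Finset.sum_congr rfl fun x _ => by rw [smul_eq_mul, mul_comm]
        have e := congrArg (fun p => homogeneousComponent n (reynolds ρ p)) hq'
        rw [reynolds_sum ρ t (fun x => x) q (fun x hx => (ht x hx).1), reynolds_eq ρ hc p hp,
          homogeneousComponent_of_mem hn, if_pos rfl, map_sum] at e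
        rw [e]
        refine Subalgebra.sum_mem _ fun x hx => ?_
        obtain ⟨hx1, d, hd0, hd⟩ := ht x hx
        rw [hc_mul hd]
        split_ifs with hdn
        · refine Subalgebra.mul_mem _ (Algebra.subset_adjoin hx) ?_
          exact ih (n - d) (by omega) _ (fun g => by rw [← matrixAct_hc, reynolds_inv])
            (homogeneousComponent_isHomogeneous _ _)
        · exact Subalgebra.zero_mem _
  rw [← sum_homogeneousComponent p]
  exact Subalgebra.sum_mem _ fun i _ => main i _ (fun g => by rw [← matrixAct_hc, hp])
    (homogeneousComponent_isHomogeneous _ _)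

theorem integral_over_invariants (ρ : G →* GL (Fin r) k)
    (A : Subalgebra k (MvPolynomial (Fin r) k))
    (hA : ∀ p, (∀ g, matrixAct (ρ g) p = p) ↔ p ∈ A) :
    Algebra.IsIntegral A (MvPolynomial (Fin r) k) := by
  let _ : MulSemiringAction G (MvPolynomial (Fin r) k) :=
    { smul := fun g p => matrixAct (ρ g⁻¹) p
      one_smul := fun p => by
        change matrixAct (ρ 1⁻¹) p = p
        simp [matrixAct_one]
      mul_smul := fun g h p => by
        change matrixAct (ρ (g * h)⁻¹) p = matrixAct (ρ g⁻¹) (matrixAct (ρ h⁻¹) p)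
        rw [mul_inv_rev, map_mul, matrixAct_mul_apply]
      smul_zero := fun g => map_zero (matrixAct (ρ g⁻¹))
      smul_add := fun g => map_add (matrixAct (ρ g⁻¹))
      smul_one := fun g => map_one (matrixAct (ρ g⁻¹))
      smul_mul := fun g => map_mul (matrixAct (ρ g⁻¹)) }
  have hs : ∀ (g : G) (p : MvPolynomial (Fin r) k), g • p = matrixAct (ρ g⁻¹) p :=
    fun _ _ => rfl
  have : SMulCommClass G A (MvPolynomial (Fin r) k) := ⟨fun g a p => by
    rw [hs, hs, Algebra.smul_def, Algebra.smul_def, map_mul]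
    congr 1
    exact (hA _).2 a.2 _⟩
  have : Algebra.IsInvariant A (MvPolynomial (Fin r) k) G := ⟨fun p hp =>
    ⟨⟨p, (hA p).1 fun g => by simpa [hs] using hp g⁻¹⟩, rfl⟩⟩
  exact Algebra.IsInvariant.isIntegral A (MvPolynomial (Fin r) k) G

end Chevalley

/-- The Chevalley–Shephard–Todd theorem: if a finite group `G` acts on `V = k^r`
by (a group generated by) pseudo-reflections, with `char k` not dividing `|G|`, then
the invariant ring `k[V]^G` is a polynomial algebra on `r = dim V` homogeneous
generators. -/
theorem polynomial_invariants_of_reflection_group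
    (G : Type*) [Group G] [Finite G] (hchar : ¬ (ringChar k : ℕ) ∣ Nat.card G)
    (ρ : G →* GL (Fin r) k)
    (hrefl : Subgroup.closure {g | g ∈ ρ.range ∧ IsPseudoReflection g} = ρ.range) :
    ∃ (d : Fin r → ℕ) (f : Fin r → MvPolynomial (Fin r) k),
      (∀ i, (f i).IsHomogeneous (d i)) ∧ AlgebraicIndependent k f ∧
        ∀ h : MvPolynomial (Fin r) k,
          (∀ g : G, matrixAct (ρ g) h = h) ↔ h ∈ Algebra.adjoin k (Set.range f) := by
  classical
  have hc : (Nat.card G : k) ≠ 0 := by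
    intro h
    exact hchar ((ringChar.spec k _).1 h)
  let P : Set (MvPolynomial (Fin r) k) :=
    {p | (∀ g, matrixAct (ρ g) p = p) ∧ ∃ d, 0 < d ∧ p.IsHomogeneous d}
  obtain ⟨t, ⟨htP, hspan⟩, htmin⟩ := WellFounded.has_min
    (measure (Finset.card (α := MvPolynomial (Fin r) k))).wf
    {t | (t : Set (MvPolynomial (Fin r) k)) ⊆ P ∧ Ideal.span P = Ideal.span t}
    ((Submodule.fg_span_iff_fg_span_finset_subset P).1
      (IsNoetherian.noetherian (Ideal.span P)))
  have ht : ∀ f ∈ t, (∀ g, matrixAct (ρ g) f = f) ∧ ∃ d, 0 < d ∧ f.IsHomogeneous d :=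
    fun f hf => htP hf
  have hI : ∀ p d, (∀ g, matrixAct (ρ g) p = p) → 0 < d → p.IsHomogeneous d →
      p ∈ Ideal.span (t : Set (MvPolynomial (Fin r) k)) := by
    intro p d hp hd hpd
    rw [← hspan]
    exact Ideal.subset_span ⟨hp, d, hd, hpd⟩
  have hmin : ∀ f ∈ t, f ∉ Ideal.span (t.erase f : Set (MvPolynomial (Fin r) k)) := by
    intro f hf hfs
    refine htmin (t.erase f) ⟨fun x hx => htP (Finset.mem_of_mem_erase hx), ?_⟩
      (Finset.card_erase_lt_of_mem hf)
    rw [hspan]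
    apply le_antisymm
    · rw [Ideal.span_le]
      intro x hx
      by_cases hxf : x = f
      · rw [hxf]; exact hfs
      · exact Ideal.subset_span (Finset.mem_coe.2 (Finset.mem_erase.2 ⟨hxf, hx⟩))
    · exact Ideal.span_mono (Finset.coe_subset.2 (Finset.erase_subset f t))
  have hzero : ∀ p ∈ Ideal.span (Set.range (X : Fin r → MvPolynomial (Fin r) k)),
      constantCoeff p = 0 := by
    intro p hp
    have : Ideal.span (Set.range (X : Fin r → MvPolynomial (Fin r) k)) ≤
        RingHom.ker (constantCoeff (R := k) (σ := Fin r)) := by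
      rw [Ideal.span_le]
      rintro _ ⟨i, rfl⟩
      simp
    exact this hp
  have hcard : t.card ≤ r := by
    refine koszul_card X t ?_ ?_ ?_
    · intro h
      have := hzero 1 (h ▸ trivial)
      simp at this
    · intro f hf
      obtain ⟨-, d, hd0, hd⟩ := ht f hf
      have := (mem_ideal_span_X_image (s := Set.univ) (x := f)).2 (by
        intro m hm
        have hdeg := hd (mem_support_iff.1 hm)
        have hm0 : m ≠ 0 := by
          rintro rfl
          simp at hdeg
          omega
        obtain ⟨i, hi⟩ := Finsupp.ne_iff.1 hm0
        exact ⟨i, trivial, hi⟩)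
      rwa [Set.image_univ] at this
    · intro f hf h hfh
      exact chevalley ρ hc hrefl t ht hI hmin f hf _ h (Nat.lt_succ_self _) hfh
  have hA : ∀ p, (∀ g, matrixAct (ρ g) p = p) ↔
      p ∈ Algebra.adjoin k (t : Set (MvPolynomial (Fin r) k)) := by
    intro p
    refine ⟨invariants_generated ρ hc t ht hI p, fun hp g => ?_⟩
    have : Algebra.adjoin k (t : Set (MvPolynomial (Fin r) k)) ≤
        AlgHom.equalizer (matrixAct (ρ g)) (AlgHom.id k _) :=
      Algebra.adjoin_le fun x hx => (ht x hx).1 g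
    exact this hp
  have hint := integral_over_invariants ρ _ hA
  have hge : r ≤ t.card := by
    have := Algebra.IsAlgebraic.trdeg_le_cardinalMk k (t : Set (MvPolynomial (Fin r) k))
    rw [MvPolynomial.trdeg_of_isDomain] at this
    simpa using this
  have hr : t.card = r := le_antisymm hcard hge
  let e : Fin r ≃ t := (t.equivFinOfCardEq hr).symm
  have hrange : Set.range (fun i => (e i : MvPolynomial (Fin r) k)) = t := by
    ext x
    constructor
    · rintro ⟨i, rfl⟩
      exact (e i).2
    · intro hx
      exact ⟨e.symm ⟨x, hx⟩, by simp⟩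
  choose d hd using fun i => (ht (e i) (e i).2).2
  refine ⟨d, fun i => e i, fun i => (hd i).2, ?_, ?_⟩
  · have : Algebra.IsAlgebraic
        (Algebra.adjoin k (Set.range (fun i => (e i : MvPolynomial (Fin r) k))))
        (MvPolynomial (Fin r) k) := by
      rw [hrange]; infer_instance
    refine (Algebra.IsAlgebraic.isTranscendenceBasis_of_lift_le_trdeg_of_finite k
      (fun i => (e i : MvPolynomial (Fin r) k)) ?_).1
    rw [MvPolynomial.trdeg_of_isDomain]
    simp
  · rw [hrange]
    exact hA
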